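/- arXiv:0812.3353 — 2 statements merged into one kernel-verified Lean document; each statement's English description precedes it below -/
import Mathlib

section
/- Let p be a point in the hyperbolic plane and σ a geodesic segment such that every point of σ lies at distance at least R from p. Then the angle subtended at p by the endpoints of σ satisfies ∠_p(σ(a), σ(b)) ≤ π/(cosh R − 1). -/
/-!
STATEMENT 1: Let `p` be a point in the hyperbolic plane and `σ` a geodesic
segment all of whose points lie at distance at least `R` from `p`.  Then the
angle subtended at `p` by the endpoints of `σ` satisfies
`∠ₚ(σ a, σ b) ≤ π / (cosh R - 1)`.

We use Mathlib's hyperbolic metric on `UpperHalfPlane`, and the Alexandrov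
angle (infimum of Euclidean comparison angles over points on the geodesics from
the vertex), which agrees with the Riemannian angle in the hyperbolic plane.
-/
open Set

noncomputable section

variable {X : Type*}

/-- `γ` is a unit-speed geodesic segment from `x` to `y`, parametrized on
`[0, dist x y]`. -/
def IsGeodesicSegBetween [MetricSpace X] (γ : ℝ → X) (x y : X) : Prop :=
  γ 0 = x ∧ γ (dist x y) = y ∧
    ∀ s ∈ Icc (0 : ℝ) (dist x y), ∀ t ∈ Icc (0 : ℝ) (dist x y),
      dist (γ s) (γ t) = |s - t|

/-- A geodesic metric space: any two points are joined by a geodesic segment. -/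
def GeodesicSpace (X : Type*) [MetricSpace X] : Prop :=
  ∀ x y : X, ∃ γ : ℝ → X, IsGeodesicSegBetween γ x y

/-- The image (side) of a geodesic segment from `x` to `y`. -/
def SideSet [MetricSpace X] (γ : ℝ → X) (x y : X) : Set X :=
  γ '' Icc (0 : ℝ) (dist x y)

/-- A triangle with sides `s₁ s₂ s₃` is `δ`-thin: each side is contained in the
`δ`-neighbourhood of the union of the other two sides. -/
def ThinTriangle [MetricSpace X] (δ : ℝ) (s₁ s₂ s₃ : Set X) : Prop :=
  (∀ p ∈ s₁, ∃ q ∈ s₂ ∪ s₃, dist p q ≤ δ) ∧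
  (∀ p ∈ s₂, ∃ q ∈ s₁ ∪ s₃, dist p q ≤ δ) ∧
  (∀ p ∈ s₃, ∃ q ∈ s₁ ∪ s₂, dist p q ≤ δ)

/-- Gromov hyperbolicity of a (geodesic) metric space: there is `δ ≥ 0` such
that all geodesic triangles are `δ`-thin. -/
def GromovHyperbolic (X : Type*) [MetricSpace X] : Prop :=
  ∃ δ : ℝ, 0 ≤ δ ∧ ∀ (A B C : X) (γa γb γc : ℝ → X),
    IsGeodesicSegBetween γa B C → IsGeodesicSegBetween γb A C →
      IsGeodesicSegBetween γc A B →
        ThinTriangle δ (SideSet γa B C) (SideSet γb A C) (SideSet γc A B)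

/-- Euclidean comparison angle at the vertex `p` of the triangle `p x y`. -/
def compAngle [MetricSpace X] (p x y : X) : ℝ :=
  Real.arccos ((dist p x ^ 2 + dist p y ^ 2 - dist x y ^ 2) /
    (2 * dist p x * dist p y))

/-- `z` lies (metrically) between `x` and `y`. -/
def MetricBtw [MetricSpace X] (x z y : X) : Prop :=
  dist x z + dist z y = dist x y

/-- The (Alexandrov) angle at `p` between the geodesics from `p` to `x` and from
`p` to `y`, as the infimum of comparison angles over points between `p` and the
endpoints; in a nonpositively curved space this is the usual Riemannian angle. -/
def angleAt [MetricSpace X] (p x y : X) : ℝ :=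
  sInf {θ : ℝ | ∃ u v : X, MetricBtw p u x ∧ u ≠ p ∧ MetricBtw p v y ∧ v ≠ p ∧
    θ = compAngle p u v}

/-- The CAT(0) comparison inequality: distances from a vertex to points of the
opposite side of any geodesic triangle are bounded by the corresponding
distances in the Euclidean comparison triangle. -/
def CATzero (X : Type*) [MetricSpace X] : Prop :=
  ∀ (x y z : X) (γ : ℝ → X), IsGeodesicSegBetween γ y z →
    ∀ s ∈ Icc (0 : ℝ) (dist y z),
      dist x (γ s) ^ 2 ≤ (1 - s / dist y z) * dist x y ^ 2 +
        (s / dist y z) * dist x z ^ 2 - s * (dist y z - s)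

/-- The comparison angle in the hyperbolic plane (curvature `-1`) at the vertex
adjacent to sides of lengths `b`, `c` and opposite a side of length `a`,
via the hyperbolic law of cosines. -/
def hypCompAngle (a b c : ℝ) : ℝ :=
  Real.arccos ((Real.cosh b * Real.cosh c - Real.cosh a) /
    (Real.sinh b * Real.sinh c))

/-- The CAT(-1) comparison inequality (comparison with triangles in the
hyperbolic plane of curvature `-1`), via the hyperbolic law of cosines; for a
simply connected complete Riemannian manifold it is equivalent to `sec ≤ -1`. -/
def CATminusOne (X : Type*) [MetricSpace X] : Prop :=
  ∀ (x y z : X) (γ : ℝ → X), IsGeodesicSegBetween γ y z →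
    ∀ s ∈ Icc (0 : ℝ) (dist y z),
      Real.cosh (dist x (γ s)) ≤
        Real.cosh (dist x y) * Real.cosh s -
          Real.sinh (dist x y) * Real.sinh s *
            Real.cos (hypCompAngle (dist x z) (dist x y) (dist y z))

/-- `σ` is a unit-speed geodesic on the interval `[a, b]`. -/
def IsGeodesicOn [MetricSpace X] (σ : ℝ → X) (a b : ℝ) : Prop :=
  a ≤ b ∧ ∀ s ∈ Icc a b, ∀ t ∈ Icc a b, dist (σ s) (σ t) = |s - t|

lemma hyp_norm_identity (s t : ℝ) : Real.sinh t ^ 2 + Real.sinh s ^ 2 +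
    2 * Real.sinh t * Real.sinh s * Real.cosh (s + t) = Real.sinh (s + t) ^ 2 := by
  rw [Real.cosh_add, Real.sinh_add]
  linear_combination (-Real.sinh t ^ 2) * Real.cosh_sq s - Real.sinh s ^ 2 * Real.cosh_sq t

lemma exists_hyp_pt (x y : UpperHalfPlane) (s t : ℝ) (hs : 0 ≤ s) (ht : 0 ≤ t)
    (hd : dist x y = s + t) (hpos : 0 < s + t) :
    ∃ z : UpperHalfPlane, ∀ p : UpperHalfPlane,
      Real.cosh (dist p z) * Real.sinh (s + t) =
        Real.cosh (dist p x) * Real.sinh t + Real.cosh (dist p y) * Real.sinh s := by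
  have hD : 0 < Real.sinh (s + t) := Real.sinh_pos_iff.2 hpos
  have hid := hyp_norm_identity s t
  rw [← hd, UpperHalfPlane.cosh_dist', hd] at hid
  have hx := x.im_pos
  have hy := y.im_pos
  have hα : 0 ≤ Real.sinh t := Real.sinh_nonneg_iff.2 ht
  have hβ : 0 ≤ Real.sinh s := Real.sinh_nonneg_iff.2 hs
  have hw : 0 < Real.sinh t * y.im + Real.sinh s * x.im := by
    rcases hs.lt_or_eq with h | h
    · have : 0 < Real.sinh s := Real.sinh_pos_iff.2 h
      positivity
    · have : 0 < Real.sinh t := Real.sinh_pos_iff.2 (by linarith)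
      positivity
  set α := Real.sinh t
  set β := Real.sinh s
  set D := Real.sinh (s + t)
  refine ⟨⟨⟨(α * x.re * y.im + β * y.re * x.im) / (α * y.im + β * x.im),
    D * x.im * y.im / (α * y.im + β * x.im)⟩, by positivity⟩, fun p => ?_⟩
  have hp := p.im_pos
  simp only [UpperHalfPlane.cosh_dist']
  have e1 : UpperHalfPlane.re ⟨⟨(α * x.re * y.im + β * y.re * x.im) / (α * y.im + β * x.im),
    D * x.im * y.im / (α * y.im + β * x.im)⟩, by positivity⟩ = (α * x.re * y.im + β * y.re * x.im) / (α * y.im + β * x.im) := rfl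
  have e2 : UpperHalfPlane.im ⟨⟨(α * x.re * y.im + β * y.re * x.im) / (α * y.im + β * x.im),
    D * x.im * y.im / (α * y.im + β * x.im)⟩, by positivity⟩ = D * x.im * y.im / (α * y.im + β * x.im) := rfl
  rw [e1, e2]
  clear e1 e2
  generalize x.re = x1 at *
  generalize y.re = y1 at *
  generalize p.re = p1 at *
  generalize x.im = x2 at *
  generalize y.im = y2 at *
  generalize p.im = p2 at *
  clear_value α β D
  field_simp at hid ⊢
  linear_combination (-(x2 * y2)) * hid

lemma hyp_stewart (x y z : UpperHalfPlane) (s t : ℝ)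
    (hxz : dist x z = s) (hzy : dist z y = t)
    (hd : dist x y = s + t) (hpos : 0 < s + t) (p : UpperHalfPlane) :
      Real.cosh (dist p z) * Real.sinh (s + t) =
        Real.cosh (dist p x) * Real.sinh t + Real.cosh (dist p y) * Real.sinh s := by
  have hD : 0 < Real.sinh (s + t) := Real.sinh_pos_iff.2 hpos
  obtain ⟨z', h⟩ := exists_hyp_pt x y s t (hxz ▸ dist_nonneg) (hzy ▸ dist_nonneg) hd hpos
  have h1 := h z
  rw [dist_comm z x, hxz, hzy] at h1
  have h2 : Real.cosh (dist z z') = 1 := by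
    apply mul_right_cancel₀ hD.ne'
    rw [h1, Real.sinh_add]; ring
  have h3 : dist z z' = 0 := by
    by_contra hne
    have := Real.one_lt_cosh.2 hne
    linarith
  rw [dist_eq_zero] at h3
  rw [h3]; exact h p

lemma exists_hyp_btw (x y : UpperHalfPlane) (s t : ℝ) (hs : 0 ≤ s) (ht : 0 ≤ t)
    (hd : dist x y = s + t) (hpos : 0 < s + t) :
    ∃ z : UpperHalfPlane, dist x z = s ∧ dist z y = t := by
  have hD : 0 < Real.sinh (s + t) := Real.sinh_pos_iff.2 hpos
  obtain ⟨z, h⟩ := exists_hyp_pt x y s t hs ht hd hpos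
  have key : ∀ u v : ℝ, 0 ≤ u → 0 ≤ v → Real.cosh u = Real.cosh v → u = v := by
    intro u v hu hv huv
    have h1 := Real.cosh_le_cosh.1 huv.le
    have h2 := Real.cosh_le_cosh.1 huv.ge
    rw [abs_of_nonneg hu, abs_of_nonneg hv] at h1 h2
    exact le_antisymm h1 h2
  refine ⟨z, key _ _ dist_nonneg hs ?_, key _ _ dist_nonneg ht ?_⟩
  · have h1 := h x
    rw [hd, dist_self, Real.cosh_zero] at h1
    apply mul_right_cancel₀ hD.ne'
    rw [h1, Real.sinh_add, Real.cosh_add]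
    linear_combination (-Real.sinh t) * Real.cosh_sq s
  · have h1 := h y
    rw [dist_comm y x, hd, dist_self, Real.cosh_zero] at h1
    rw [dist_comm]
    apply mul_right_cancel₀ hD.ne'
    rw [h1, Real.sinh_add, Real.cosh_add]
    linear_combination (-Real.sinh s) * Real.cosh_sq t

lemma arccos_le_pi_mul (q : ℝ) (hq : 0 ≤ q) : Real.arccos (1 - 2 * q ^ 2) ≤ Real.pi * q := by
  have hpi := Real.pi_pos
  rcases le_total 1 q with h | h
  · exact (Real.arccos_le_pi _).trans (by nlinarith)
  · have h1 : q ≤ Real.sin (Real.pi * q / 2) := by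
      have := Real.mul_le_sin (x := Real.pi * q / 2) (by positivity) (by nlinarith)
      convert this using 1
      field_simp
    have h2 : Real.cos (Real.pi * q) ≤ 1 - 2 * q ^ 2 := by
      have : Real.cos (Real.pi * q) = 1 - 2 * Real.sin (Real.pi * q / 2) ^ 2 := by
        have h3 := Real.cos_two_mul (Real.pi * q / 2)
        rw [Real.cos_sq'] at h3
        rw [← sub_eq_zero]
        rw [← sub_eq_zero] at h3
        rw [show 2 * (Real.pi * q / 2) = Real.pi * q by ring] at h3
        linear_combination h3
      rw [this]
      nlinarith
    calc _ ≤ Real.arccos (Real.cos (Real.pi * q)) := Real.arccos_le_arccos h2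
      _ = _ := Real.arccos_cos (by positivity) (by nlinarith)

/-- The sine-squared of the half angle is at most `1 / cosh R ^ 2`. -/
lemma half_angle_bound (p : UpperHalfPlane) (σ : ℝ → UpperHalfPlane)
    (a b R : ℝ) (hR : 0 < R) (hgeo : IsGeodesicOn σ a b)
    (hfar : ∀ t ∈ Icc a b, R ≤ dist p (σ t)) (S : ℝ)
    (hS : 2 * Real.sinh (dist p (σ a)) * Real.sinh (dist p (σ b)) * S =
      Real.cosh (dist (σ a) (σ b)) - Real.cosh (dist p (σ a) - dist p (σ b))) :
    S * Real.cosh R ^ 2 ≤ 1 := by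
  obtain ⟨hab, hg⟩ := hgeo
  have ha : a ∈ Icc a b := ⟨le_rfl, hab⟩
  have hb : b ∈ Icc a b := ⟨hab, le_rfl⟩
  have hA := hfar a ha
  have hB := hfar b hb
  have hc : dist (σ a) (σ b) = b - a := by
    rw [hg a ha b hb, abs_sub_comm, abs_of_nonneg (by linarith)]
  have htri : b - a ≤ dist p (σ a) + dist p (σ b) := by
    rw [← hc, dist_comm p (σ a)]; exact dist_triangle _ _ _
  rw [hc] at hS
  have hstew : ∀ s ∈ Icc 0 (b - a), 0 < b - a →
      Real.cosh (dist p (σ (a + s))) * Real.sinh (b - a) =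
      Real.cosh (dist p (σ a)) * Real.sinh (b - a - s) +
        Real.cosh (dist p (σ b)) * Real.sinh s := by
    intro s hs hpos
    have hm : a + s ∈ Icc a b := ⟨by linarith [hs.1], by linarith [hs.2]⟩
    have := hyp_stewart (σ a) (σ b) (σ (a + s)) s (b - a - s)
      (by rw [hg a ha _ hm, abs_sub_comm, abs_of_nonneg (by linarith [hs.1])]; ring)
      (by rw [hg _ hm b hb, abs_sub_comm, abs_of_nonneg (by linarith [hs.2])]; ring)
      (by rw [hc]; ring) (by linarith) p
    rwa [show s + (b - a - s) = b - a by ring] at this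
  have hRfar : ∀ s ∈ Icc 0 (b - a), Real.cosh R ≤ Real.cosh (dist p (σ (a + s))) := by
    intro s hs
    have hm : a + s ∈ Icc a b := ⟨by linarith [hs.1], by linarith [hs.2]⟩
    rw [Real.cosh_le_cosh, abs_of_pos hR, abs_of_nonneg dist_nonneg]
    exact hfar _ hm
  set A := dist p (σ a)
  set B := dist p (σ b)
  have hsA : 0 < Real.sinh A := Real.sinh_pos_iff.2 (by linarith)
  have hsB : 0 < Real.sinh B := Real.sinh_pos_iff.2 (by linarith)
  have hcA := Real.cosh_pos A
  have hcB := Real.cosh_pos B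
  rcases hab.eq_or_lt with h | h
  · have h1 : Real.cosh (b - a) = 1 := by rw [h]; simp
    have h2 := Real.one_le_cosh (A - B)
    have h3 : S ≤ 0 := by
      by_contra hneg
      push Not at hneg
      have : 0 < 2 * Real.sinh A * Real.sinh B * S := by positivity
      linarith
    nlinarith [sq_nonneg (Real.cosh R)]
  have hcpos : 0 < b - a := by linarith
  -- the bisecting point
  obtain ⟨s, hs, hs0⟩ : ∃ s ∈ Icc 0 (b - a),
      Real.sinh B * Real.sinh s - Real.sinh A * Real.sinh (b - a - s) = 0 := by
    have hcont : ContinuousOn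
      (fun s => Real.sinh B * Real.sinh s - Real.sinh A * Real.sinh (b - a - s))
        (Icc 0 (b - a)) := by
      have := Real.continuous_sinh
      fun_prop
    have hsc : 0 < Real.sinh (b - a) := Real.sinh_pos_iff.2 hcpos
    have := intermediate_value_Icc hcpos.le hcont
    obtain ⟨s, hs, h0⟩ := this (show (0 : ℝ) ∈ _ by
      constructor
      · simp only [Real.sinh_zero, sub_zero]; nlinarith
      · simp only [sub_self, Real.sinh_zero]; nlinarith)
    exact ⟨s, hs, h0⟩
  have h1 := hstew s hs hcpos
  have h2 := hRfar s hs
  set L := Real.cosh (dist p (σ (a + s)))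
  have hid := hyp_norm_identity s (b - a - s)
  rw [show s + (b - a - s) = b - a by ring] at hid
  have hcs : 0 < Real.sinh (b - a) := Real.sinh_pos_iff.2 hcpos
  obtain ⟨k, hk⟩ : ∃ k, k = Real.sinh s / Real.sinh A := ⟨_, rfl⟩
  have hk1 : Real.sinh s = k * Real.sinh A := by rw [hk]; field_simp
  have hk2 : Real.sinh (b - a - s) = k * Real.sinh B := by
    apply mul_left_cancel₀ hsA.ne'
    rw [hk1] at hs0
    linear_combination -hs0
  rw [hk1, hk2] at h1 hid
  have hS1 : S ≤ 1 := by
    have h5 : Real.cosh (b - a) ≤ Real.cosh (A + B) := by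
      rw [Real.cosh_le_cosh, abs_of_pos hcpos, abs_of_nonneg (by linarith)]; exact htri
    rw [Real.cosh_add] at h5
    rw [Real.cosh_sub A] at hS
    have : 0 < 2 * Real.sinh A * Real.sinh B := by positivity
    by_contra hneg
    push Not at hneg
    nlinarith
  have hk0 : k ≠ 0 := by
    rintro rfl
    have hid := hid
    exact (pow_pos hcs 2).ne' (by simpa using hid.symm)
  rw [Real.cosh_sub A] at hS
  have hLs : S * L ^ 2 ≤ 1 := by
    have e1 : (L * Real.sinh (b - a)) ^ 2 =
      k ^ 2 * (Real.cosh A * Real.sinh B + Real.cosh B * Real.sinh A) ^ 2 := by rw [h1]; ring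
    have e2 : Real.sinh (b - a) ^ 2 = k ^ 2 *
        ((Real.cosh A * Real.sinh B + Real.cosh B * Real.sinh A) ^ 2 -
          4 * Real.sinh A ^ 2 * Real.sinh B ^ 2 * (1 - S)) := by
      rw [← hid]
      have := Real.cosh_sq A
      have := Real.cosh_sq B
      linear_combination (-2 * k ^ 2 * Real.sinh A * Real.sinh B) * hS
        - k ^ 2 * Real.sinh B ^ 2 * Real.cosh_sq A - k ^ 2 * Real.sinh A ^ 2 * Real.cosh_sq B
    have e3 : 2 * Real.sinh A * Real.sinh B ≤
        Real.cosh A * Real.sinh B + Real.cosh B * Real.sinh A := by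
      nlinarith [Real.sinh_lt_cosh A, Real.sinh_lt_cosh B]
    have e4 : (2 * Real.sinh A * Real.sinh B) ^ 2 ≤
        (Real.cosh A * Real.sinh B + Real.cosh B * Real.sinh A) ^ 2 := by gcongr
    have e5 : S * L ^ 2 * Real.sinh (b - a) ^ 2 ≤ 1 * Real.sinh (b - a) ^ 2 := by
      have : S * L ^ 2 * Real.sinh (b - a) ^ 2 = S * (L * Real.sinh (b - a)) ^ 2 := by ring
      rw [this, e1, e2]
      have := mul_nonneg (mul_nonneg (sub_nonneg.2 e4) (sub_nonneg.2 hS1)) (sq_nonneg k)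
      linarith
    exact le_of_mul_le_mul_right e5 (by positivity)
  rcases le_total S 0 with h0 | h0
  · nlinarith [sq_nonneg (Real.cosh R)]
  · have : Real.cosh R ^ 2 ≤ L ^ 2 := by
      have := Real.cosh_pos R
      gcongr
    nlinarith

/-- **Visibility estimate in the hyperbolic plane**: a geodesic segment at
distance at least `R` from `p` subtends an angle at most `π / (cosh R - 1)`
at `p`. -/
theorem angle_le_of_far (p : UpperHalfPlane) (σ : ℝ → UpperHalfPlane)
    (a b R : ℝ) (hR : 0 < R) (hgeo : IsGeodesicOn σ a b)
    (hfar : ∀ t ∈ Icc a b, R ≤ dist p (σ t)) :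
    angleAt p (σ a) (σ b) ≤ Real.pi / (Real.cosh R - 1) := by
  have hA := hfar a ⟨le_rfl, hgeo.1⟩
  have hB := hfar b ⟨hgeo.1, le_rfl⟩
  have hcR : 1 < Real.cosh R := Real.one_lt_cosh.2 hR.ne'
  have hsA : 0 < Real.sinh (dist p (σ a)) := Real.sinh_pos_iff.2 (by linarith)
  have hsB : 0 < Real.sinh (dist p (σ b)) := Real.sinh_pos_iff.2 (by linarith)
  obtain ⟨S, hS⟩ : ∃ S, 2 * Real.sinh (dist p (σ a)) * Real.sinh (dist p (σ b)) * S =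
      Real.cosh (dist (σ a) (σ b)) - Real.cosh (dist p (σ a) - dist p (σ b)) :=
    ⟨(Real.cosh (dist (σ a) (σ b)) - Real.cosh (dist p (σ a) - dist p (σ b))) /
      (2 * Real.sinh (dist p (σ a)) * Real.sinh (dist p (σ b))), by field_simp⟩
  have hSb := half_angle_bound p σ a b R hR hgeo hfar S hS
  -- small radius
  obtain ⟨r, hr0, hrR, hrK⟩ : ∃ r, 0 < r ∧ r ≤ R ∧
      Real.cosh r * (Real.cosh R - 1) < Real.cosh R := by
    have hlim : ∀ᶠ r in nhdsWithin (0 : ℝ) (Ioi 0),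
        Real.cosh r * (Real.cosh R - 1) < Real.cosh R := by
      apply Filter.Eventually.filter_mono nhdsWithin_le_nhds
      have hc : Continuous fun r => Real.cosh r * (Real.cosh R - 1) :=
        Real.continuous_cosh.mul continuous_const
      exact hc.continuousAt.eventually_lt continuousAt_const (by simp)
    have hlt : ∀ᶠ r in nhdsWithin (0 : ℝ) (Ioi 0), r ∈ Ioo 0 R := Ioo_mem_nhdsGT hR
    obtain ⟨r, h1, h2⟩ := (hlim.and hlt).exists
    exact ⟨r, h2.1, h2.2.le, h1⟩
  have hsr : Real.sinh r ≤ r * Real.cosh r := by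
    obtain ⟨ξ, hξ, h⟩ := exists_hasDerivAt_eq_slope Real.sinh Real.cosh hr0
      Real.continuous_sinh.continuousOn (fun z _ => Real.hasDerivAt_sinh z)
    have h1 : Real.cosh ξ ≤ Real.cosh r := by
      rw [Real.cosh_le_cosh, abs_of_pos hξ.1, abs_of_pos hr0]; exact hξ.2.le
    rw [Real.sinh_zero, sub_zero, sub_zero] at h
    rw [h, div_le_iff₀ hr0] at h1
    linarith
  generalize σ a = x at *
  generalize σ b = y at *
  obtain ⟨u, hu1, hu2⟩ := exists_hyp_btw p x r (dist p x - r) hr0.le (by linarith)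
    (by ring) (by linarith)
  obtain ⟨v, hv1, hv2⟩ := exists_hyp_btw p y r (dist p y - r) hr0.le (by linarith)
    (by ring) (by linarith)
  have k1 := hyp_stewart p x u r (dist p x - r) hu1 hu2 (by ring) (by linarith) y
  have k2 := hyp_stewart p y v r (dist p y - r) hv1 hv2 (by ring) (by linarith) u
  rw [add_sub_cancel] at k1 k2
  rw [dist_comm u p, hu1, dist_comm u y] at k2
  rw [dist_comm y p, dist_comm y x] at k1
  have hsr0 : 0 < Real.sinh r := Real.sinh_pos_iff.2 hr0
  have key : Real.cosh (dist u v) = 1 + 2 * Real.sinh r ^ 2 * S := by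
    apply mul_right_cancel₀ (mul_pos hsA hsB).ne'
    rw [Real.sinh_sub] at k1 k2
    rw [Real.cosh_sub (dist p _)] at hS
    linear_combination Real.sinh (dist p x) * k2 + Real.sinh r * k1 - Real.sinh r ^ 2 * hS
      + Real.sinh (dist p x) * Real.sinh (dist p y) * Real.cosh_sq r
  have hq : dist u v / (2 * r) ≤ 1 / (Real.cosh R - 1) := by
    have h1 : Real.cosh (dist u v) = 1 + 2 * Real.sinh (dist u v / 2) ^ 2 := by
      have := Real.cosh_two_mul (dist u v / 2)
      rw [Real.cosh_sq, mul_div_cancel₀ _ (two_ne_zero)] at this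
      linear_combination this
    have h2 : Real.sinh (dist u v / 2) ^ 2 = Real.sinh r ^ 2 * S := by linarith
    have h3 : dist u v / 2 ≤ Real.sinh (dist u v / 2) :=
      Real.self_le_sinh_iff.2 (by positivity)
    have hd : 0 ≤ dist u v := dist_nonneg
    have h4 : Real.sinh (dist u v / 2) * Real.cosh R ≤ Real.sinh r := by
      refine le_of_abs_le (abs_le_of_sq_le_sq ?_ hsr0.le)
      rw [mul_pow, h2]
      nlinarith [sq_nonneg (Real.sinh r)]
    rw [div_le_div_iff₀ (by positivity) (by linarith)]
    have h5 : dist u v / 2 * Real.cosh R ≤ r * Real.cosh r :=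
      (mul_le_mul_of_nonneg_right h3 (by linarith)).trans (h4.trans hsr)
    have h6 : dist u v / 2 * Real.cosh R * (Real.cosh R - 1) ≤ r * Real.cosh R := by
      calc _ ≤ r * Real.cosh r * (Real.cosh R - 1) :=
            mul_le_mul_of_nonneg_right h5 (by linarith)
        _ = r * (Real.cosh r * (Real.cosh R - 1)) := by ring
        _ ≤ _ := mul_le_mul_of_nonneg_left hrK.le hr0.le
    have h7 : dist u v / 2 * (Real.cosh R - 1) ≤ r :=
      le_of_mul_le_mul_right (a := Real.cosh R) (by linarith) (by linarith)
    linarith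
  have hmem : compAngle p u v ∈ {θ : ℝ | ∃ u v : UpperHalfPlane, MetricBtw p u x ∧ u ≠ p ∧
      MetricBtw p v y ∧ v ≠ p ∧ θ = compAngle p u v} := by
    refine ⟨u, v, ?_, ?_, ?_, ?_, rfl⟩
    · unfold MetricBtw; rw [hu1, hu2]; ring
    · rintro rfl; rw [dist_self] at hu1; linarith
    · unfold MetricBtw; rw [hv1, hv2]; ring
    · rintro rfl; rw [dist_self] at hv1; linarith
  have hbdd : BddBelow {θ : ℝ | ∃ u v : UpperHalfPlane, MetricBtw p u x ∧ u ≠ p ∧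
      MetricBtw p v y ∧ v ≠ p ∧ θ = compAngle p u v} := by
    refine ⟨0, ?_⟩
    rintro _ ⟨u, v, -, -, -, -, rfl⟩
    exact Real.arccos_nonneg _
  refine (csInf_le hbdd hmem).trans ?_
  have hcomp : compAngle p u v = Real.arccos (1 - 2 * (dist u v / (2 * r)) ^ 2) := by
    unfold compAngle
    rw [hu1, hv1]
    congr 1
    field_simp
    ring
  rw [hcomp]
  refine (arccos_le_pi_mul _ (by positivity)).trans ?_
  rw [div_eq_mul_one_div Real.pi]
  exact mul_le_mul_of_nonneg_left hq Real.pi_pos.le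
end
end

section
/- Preissman-type theorem: if M is a closed Riemannian manifold of nonpositive curvature whose universal cover contains no totally geodesic flat plane (i.e., M is a visibility manifold), then π₁(M) contains no subgroup isomorphic to ℤ ⊕ ℤ. -/
/-!
STATEMENT 18: Preissman-type theorem: if `M` is a closed Riemannian manifold of
nonpositive curvature whose universal cover contains no totally geodesic flat
plane (i.e. `M` is a visibility manifold), then `π₁(M)` contains no subgroup
isomorphic to `ℤ ⊕ ℤ`.

The universal cover of a closed nonpositively curved manifold is a complete,
simply connected space of nonpositive curvature on which `π₁(M)` acts freely,
properly discontinuously and cocompactly by isometries.  Mathlib has no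
Riemannian curvature, so we formalize `M` through this data: `X` is a complete
geodesic CAT(0) space (≡ Hadamard manifold, in the smooth case), a totally
geodesic flat plane is an isometrically embedded `ℝ²`, and the conclusion is
that the deck group `Γ ≅ π₁(M)` has no subgroup isomorphic to `ℤ ⊕ ℤ`.
-/
open Set

noncomputable section

variable {X : Type*}

open Set


theorem aux_sq {a b : ℝ} (h : a ^ 2 ≤ b ^ 2) (hb : 0 ≤ b) : a ≤ b := by
  nlinarith [sq_nonneg (a - b), sq_nonneg (a + b)]

/-- Points on geodesics, with the comparison inequality. -/
theorem aux_pt {X : Type*} [MetricSpace X] (hgeo : GeodesicSpace X) (hcat : CATzero X)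
    (x y : X) (t : ℝ) (h0 : 0 ≤ t) (h1 : t ≤ 1) :
    ∃ m : X, ∀ z, dist z m ^ 2 ≤ (1 - t) * dist z x ^ 2 + t * dist z y ^ 2
      - t * (1 - t) * dist x y ^ 2 := by
  by_cases hxy : dist x y = 0
  · refine ⟨x, fun z => ?_⟩
    have : x = y := dist_eq_zero.mp hxy
    subst this
    simp
    nlinarith
  · obtain ⟨γ, hγ⟩ := hgeo x y
    have hd : 0 ≤ dist x y := dist_nonneg
    refine ⟨γ (t * dist x y), fun z => ?_⟩
    have := hcat z x y γ hγ (t * dist x y) ⟨by positivity, by nlinarith⟩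
    rw [mul_div_assoc, div_self hxy, mul_one] at this
    nlinarith

/-- Midpoints in the sense of Bruhat and Tits. -/
def AuxMid {X : Type*} [MetricSpace X] (x y m : X) : Prop :=
  ∀ z, dist z m ^ 2 ≤ dist z x ^ 2 / 2 + dist z y ^ 2 / 2 - dist x y ^ 2 / 4

theorem aux_mid_exists {X : Type*} [MetricSpace X] (hgeo : GeodesicSpace X) (hcat : CATzero X)
    (x y : X) : ∃ m, AuxMid x y m := by
  obtain ⟨m, hm⟩ := aux_pt hgeo hcat x y (1/2) (by norm_num) (by norm_num)
  refine ⟨m, fun z => ?_⟩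
  have := hm z
  nlinarith

theorem AuxMid.map {X : Type*} [MetricSpace X] {x y m : X} (h : AuxMid x y m) (g : X ≃ᵢ X) :
    AuxMid (g x) (g y) (g m) := by
  intro z
  obtain ⟨w, rfl⟩ := g.surjective z
  simpa [g.isometry.dist_eq] using h w

theorem AuxMid.left {X : Type*} [MetricSpace X] {x y m : X} (h : AuxMid x y m) :
    dist x m ≤ dist x y / 2 := by
  have := h x
  simp at this
  apply aux_sq _ (by positivity)
  nlinarith

theorem AuxMid.symm {X : Type*} [MetricSpace X] {x y m : X} (h : AuxMid x y m) :
    AuxMid y x m := by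
  intro z
  have := h z
  rw [dist_comm y x]
  linarith

/-- A metric midpoint is a midpoint. -/
theorem aux_mid_of_metric {X : Type*} [MetricSpace X] (hgeo : GeodesicSpace X) (hcat : CATzero X)
    (x y q : X) (c : ℝ) (h1 : dist q x = c) (h2 : dist q y = c) (h3 : dist x y = 2 * c) :
    AuxMid x y q := by
  obtain ⟨m, hm⟩ := aux_mid_exists hgeo hcat x y
  have := hm q
  rw [h1, h2, h3] at this
  have h0 : dist q m ^ 2 ≤ 0 := by nlinarith
  have : q = m := by
    apply dist_eq_zero.mp
    exact pow_eq_zero_iff (two_ne_zero) |>.mp (le_antisymm h0 (sq_nonneg _))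
  rwa [this]

theorem aux_mid_common {X : Type*} [MetricSpace X] {x y y' m n : X}
    (hm : AuxMid x y m) (hn : AuxMid x y' n) : dist m n ≤ dist y y' / 2 := by
  have h1 := hn m
  have h2 := hm y'
  have h3 := hm.left
  rw [dist_comm y' m, dist_comm y' x, dist_comm y' y] at h2
  rw [dist_comm m x] at h1
  apply aux_sq _ (by positivity)
  have : dist x m ^ 2 ≤ (dist x y / 2) ^ 2 := by gcongr
  nlinarith

theorem aux_mid_convex {X : Type*} [MetricSpace X] (hgeo : GeodesicSpace X) (hcat : CATzero X)
    {x y x' y' m m' : X}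
    (hm : AuxMid x y m) (hm' : AuxMid x' y' m') : dist m m' ≤ dist x x' / 2 + dist y y' / 2 := by
  obtain ⟨n, hn⟩ := aux_mid_exists hgeo hcat x y'
  have h1 := aux_mid_common hm hn
  have h2 := aux_mid_common hn.symm hm'.symm
  linarith [dist_triangle m n m']

theorem aux_quad {X : Type*} [MetricSpace X] (hgeo : GeodesicSpace X) (hcat : CATzero X)
    (p q r s : X) : dist p r ^ 2 + dist q s ^ 2 ≤
      dist p q ^ 2 + dist q r ^ 2 + dist r s ^ 2 + dist s p ^ 2 := by
  obtain ⟨m, hm⟩ := aux_mid_exists hgeo hcat p r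
  have h1 := hm q
  have h2 := hm s
  have h3 := dist_triangle_right q s m
  have h4 : dist q s ^ 2 ≤ (dist q m + dist s m) ^ 2 := by gcongr
  rw [dist_comm q p] at h1
  rw [dist_comm s r] at h2
  nlinarith [sq_nonneg (dist q m - dist s m)]

/-- Finiteness at small scale. -/
theorem aux_fin_small {X : Type*} [MetricSpace X] (Γ : Subgroup (X ≃ᵢ X))
    (hproper : ∀ x : X, ∃ V : Set X, IsOpen V ∧ x ∈ V ∧
      Set.Finite {γ : X ≃ᵢ X | γ ∈ Γ ∧ ((⇑γ) '' V ∩ V).Nonempty})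
    (K : Set X) (hK : IsCompact K) :
    ∃ ε > 0, Set.Finite {γ : X ≃ᵢ X | γ ∈ Γ ∧ ∃ k ∈ K, ∃ k' ∈ K, dist k (γ k') < ε} := by
  have key : ∀ x y : X, ∃ r > 0, Set.Finite {γ : X ≃ᵢ X | γ ∈ Γ ∧ dist x (γ y) < r} := by
    intro x y
    obtain ⟨V, hV, hy, hfin⟩ := hproper y
    obtain ⟨r, hr, hrV⟩ := Metric.isOpen_iff.mp hV y hy
    refine ⟨r / 2, by positivity, ?_⟩
    rcases Set.eq_empty_or_nonempty {γ : X ≃ᵢ X | γ ∈ Γ ∧ dist x (γ y) < r / 2} with h | ⟨g, hg⟩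
    · rw [h]; exact Set.finite_empty
    · refine (hfin.image (fun h => g * h)).subset ?_
      intro h hh
      refine ⟨g⁻¹ * h, ⟨Γ.mul_mem (Γ.inv_mem hg.1) hh.1, ⟨(g⁻¹ * h) y, ⟨y, hy, rfl⟩, hrV ?_⟩⟩, by simp⟩
      rw [Metric.mem_ball, ← g.isometry.dist_eq]
      have e : g ((g⁻¹ * h) y) = h y := by
        rw [← IsometryEquiv.mul_apply]; simp
      rw [e]
      have h1 := hg.2
      have h2 := hh.2
      linarith [dist_triangle_left (h y) (g y) x]
  have := (hK.prod hK).induction_on (p := fun W : Set (X × X) => ∃ ε > 0,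
    Set.Finite {γ : X ≃ᵢ X | γ ∈ Γ ∧ ∃ w ∈ W, dist w.1 (γ w.2) < ε}) ?_ ?_ ?_ ?_
  · obtain ⟨ε, hε, hf⟩ := this
    refine ⟨ε, hε, hf.subset ?_⟩
    rintro γ ⟨h1, k, hk, k', hk', h⟩
    exact ⟨h1, (k, k'), ⟨hk, hk'⟩, h⟩
  · exact ⟨1, one_pos, by simp⟩
  · rintro s t hst ⟨ε, hε, hf⟩
    refine ⟨ε, hε, hf.subset ?_⟩
    rintro γ ⟨h1, w, hw, h⟩
    exact ⟨h1, w, hst hw, h⟩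
  · rintro s t ⟨ε, hε, hf⟩ ⟨ε', hε', hf'⟩
    refine ⟨min ε ε', lt_min hε hε', (hf.union hf').subset ?_⟩
    rintro γ ⟨h1, w, hw | hw, h⟩
    · exact Or.inl ⟨h1, w, hw, h.trans_le (min_le_left _ _)⟩
    · exact Or.inr ⟨h1, w, hw, h.trans_le (min_le_right _ _)⟩
  · rintro ⟨x, y⟩ -
    obtain ⟨r, hr, hf⟩ := key x y
    refine ⟨Metric.ball x (r/3) ×ˢ Metric.ball y (r/3), mem_nhdsWithin_of_mem_nhds
      (prod_mem_nhds (Metric.ball_mem_nhds _ (by positivity))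
        (Metric.ball_mem_nhds _ (by positivity))), r / 3, by positivity, hf.subset ?_⟩
    rintro γ ⟨h1, ⟨k, k'⟩, ⟨hk, hk'⟩, h⟩
    refine ⟨h1, ?_⟩
    simp only [Metric.mem_ball] at hk hk' h
    have h3 : dist (γ k') (γ y) = dist k' y := γ.isometry.dist_eq _ _
    have h4 := dist_triangle4 x k (γ k') (γ y)
    rw [dist_comm x k] at h4
    linarith

/-- Finiteness at every scale. -/
theorem aux_fin {X : Type*} [MetricSpace X] (hgeo : GeodesicSpace X) (Γ : Subgroup (X ≃ᵢ X))
    (hproper : ∀ x : X, ∃ V : Set X, IsOpen V ∧ x ∈ V ∧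
      Set.Finite {γ : X ≃ᵢ X | γ ∈ Γ ∧ ((⇑γ) '' V ∩ V).Nonempty})
    (K : Set X) (hK : IsCompact K) (hcov : (⋃ γ ∈ Γ, (⇑γ) '' K) = univ) (R : ℝ) :
    Set.Finite {γ : X ≃ᵢ X | γ ∈ Γ ∧ ∃ k ∈ K, ∃ k' ∈ K, dist k (γ k') ≤ R} := by
  obtain ⟨ε, hε, hf⟩ := aux_fin_small Γ hproper K hK
  have main : ∀ m : ℕ, Set.Finite {γ : X ≃ᵢ X | γ ∈ Γ ∧ ∃ k ∈ K, ∃ k' ∈ K,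
      dist k (γ k') ≤ (m + 1) * (ε / 2)} := by
    intro m
    induction m with
    | zero =>
      refine hf.subset ?_
      rintro γ ⟨h1, k, hk, k', hk', h⟩
      refine ⟨h1, k, hk, k', hk', lt_of_le_of_lt h ?_⟩
      simp; linarith
    | succ m ih =>
      refine (ih.mul hf).subset ?_
      rintro γ ⟨h1, k, hk, k', hk', h⟩
      have hy : ∃ y, dist k y ≤ (m + 1) * (ε / 2) ∧ dist y (γ k') ≤ ε / 2 := by
        by_cases hc : dist k (γ k') ≤ (m + 1) * (ε / 2)
        · exact ⟨γ k', hc, by simp; linarith⟩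
        · push Not at hc
          obtain ⟨σ, s0, s1, hs⟩ := hgeo k (γ k')
          have hp : 0 ≤ (m + 1) * (ε / 2) := by positivity
          refine ⟨σ ((m + 1) * (ε / 2)), ?_, ?_⟩
          · have := hs 0 ⟨le_rfl, dist_nonneg⟩ ((m + 1) * (ε / 2)) ⟨hp, hc.le⟩
            rw [s0] at this
            rw [this, zero_sub, abs_neg, abs_of_nonneg hp]
          · have := hs ((m + 1) * (ε / 2)) ⟨hp, hc.le⟩ _ ⟨dist_nonneg, le_rfl⟩
            rw [s1] at this
            rw [this, abs_sub_comm, abs_of_nonneg (by linarith)]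
            push_cast at h
            linarith
      obtain ⟨y, hy1, hy2⟩ := hy
      have hyu : y ∈ (⋃ γ ∈ Γ, (⇑γ) '' K) := by rw [hcov]; trivial
      simp only [mem_iUnion] at hyu
      obtain ⟨g, hg, k'', hk'', rfl⟩ := hyu
      refine Set.mem_mul.mpr ⟨g, ⟨hg, k, hk, k'', hk'', hy1⟩, g⁻¹ * γ,
        ⟨Γ.mul_mem (Γ.inv_mem hg) h1, k'', hk'', k', hk', ?_⟩, by simp⟩
      rw [← g.isometry.dist_eq]
      have e : g ((g⁻¹ * γ) k') = γ k' := by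
        rw [← IsometryEquiv.mul_apply]; simp
      rw [e]
      linarith
  obtain ⟨m, hm⟩ := exists_nat_gt (R / (ε / 2))
  refine (main m).subset ?_
  rintro γ ⟨h1, k, hk, k', hk', h⟩
  refine ⟨h1, k, hk, k', hk', h.trans ?_⟩
  rw [div_lt_iff₀ (by positivity)] at hm
  nlinarith

/-- Simultaneous minimizer. -/
theorem aux_min {X : Type*} [MetricSpace X] [Nonempty X] (Γ : Subgroup (X ≃ᵢ X))
    (K : Set X) (hK : IsCompact K) (hcov : (⋃ γ ∈ Γ, (⇑γ) '' K) = univ)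
    (hfin : ∀ R : ℝ,
      Set.Finite {γ : X ≃ᵢ X | γ ∈ Γ ∧ ∃ k ∈ K, ∃ k' ∈ K, dist k (γ k') ≤ R})
    (a b : X ≃ᵢ X) (ha : a ∈ Γ) (hb : b ∈ Γ) :
    ∃ p : X, ∀ y : X, dist p (a p) + dist p (b p) ≤ dist y (a y) + dist y (b y) := by
  obtain ⟨y0⟩ := ‹Nonempty X›
  have cov : ∀ y : X, ∃ g ∈ Γ, ∃ k ∈ K, g k = y := by
    intro y
    have hyu : y ∈ (⋃ γ ∈ Γ, (⇑γ) '' K) := by rw [hcov]; trivial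
    simp only [mem_iUnion] at hyu
    obtain ⟨g, hg, k'', hk'', rfl⟩ := hyu
    exact ⟨g, hg, k'', hk'', rfl⟩
  have hconj : ∀ (c g : X ≃ᵢ X) (k : X), dist k ((g⁻¹ * c * g) k) = dist (g k) (c (g k)) := by
    intro c g k
    rw [← g.isometry.dist_eq]
    congr 1
    rw [← IsometryEquiv.mul_apply, ← IsometryEquiv.mul_apply]
    congr 1
    group
  set R := dist y0 (a y0) + dist y0 (b y0) with hR
  set T := {γ : X ≃ᵢ X | γ ∈ Γ ∧ ∃ k ∈ K, ∃ k' ∈ K, dist k (γ k') ≤ R} with hT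
  let P : Set ((X ≃ᵢ X) × (X ≃ᵢ X)) :=
    {c | c ∈ T ×ˢ T ∧ ∃ g ∈ Γ, c = (g⁻¹ * a * g, g⁻¹ * b * g)}
  have hP : P.Finite := ((hfin R).prod (hfin R)).subset (fun c hc => hc.1)
  have hin : ∀ y, dist y (a y) + dist y (b y) ≤ R → ∃ c ∈ P, ∃ k ∈ K,
      dist y (a y) + dist y (b y) = dist k (c.1 k) + dist k (c.2 k) := by
    intro y hy
    obtain ⟨g, hg, k, hk, rfl⟩ := cov y
    refine ⟨(g⁻¹ * a * g, g⁻¹ * b * g), ⟨⟨⟨?_, k, hk, k, hk, ?_⟩, ⟨?_, k, hk, k, hk, ?_⟩⟩,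
      g, hg, rfl⟩, k, hk, ?_⟩
    · exact Γ.mul_mem (Γ.mul_mem (Γ.inv_mem hg) ha) hg
    · rw [hconj]; linarith [dist_nonneg (x := g k) (y := b (g k))]
    · exact Γ.mul_mem (Γ.mul_mem (Γ.inv_mem hg) hb) hg
    · rw [hconj]; linarith [dist_nonneg (x := g k) (y := a (g k))]
    · simp only [hconj]
  have hKne : K.Nonempty := by
    obtain ⟨g, hg, k, hk, -⟩ := cov y0
    exact ⟨k, hk⟩
  have hmin : ∀ c : (X ≃ᵢ X) × (X ≃ᵢ X), ∃ k ∈ K, ∀ k' ∈ K,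
      dist k (c.1 k) + dist k (c.2 k) ≤ dist k' (c.1 k') + dist k' (c.2 k') := by
    intro c
    have h1 := c.1.continuous
    have h2 := c.2.continuous
    obtain ⟨k, hk, h⟩ := hK.exists_isMinOn hKne
      (f := fun k => dist k (c.1 k) + dist k (c.2 k)) (by fun_prop)
    exact ⟨k, hk, fun k' hk' => h hk'⟩
  choose κ hκ hκm using hmin
  obtain ⟨c0, hc0, k0, hk0, e0⟩ := hin y0 le_rfl
  obtain ⟨c, hc, hcm⟩ := Set.exists_min_image P
    (fun c => dist (κ c) (c.1 (κ c)) + dist (κ c) (c.2 (κ c))) hP ⟨c0, hc0⟩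
  obtain ⟨hcT, g, hg, rfl⟩ := hc
  refine ⟨g (κ (g⁻¹ * a * g, g⁻¹ * b * g)), fun y => ?_⟩
  rw [← hconj, ← hconj]
  set q := κ (g⁻¹ * a * g, g⁻¹ * b * g) with hq
  have case1 : ∀ y, dist y (a y) + dist y (b y) ≤ R →
      dist q ((g⁻¹ * a * g) q) + dist q ((g⁻¹ * b * g) q) ≤ dist y (a y) + dist y (b y) := by
    intro y hy
    obtain ⟨c', hc', k', hk', e'⟩ := hin y hy
    rw [e']
    exact (hcm c' hc').trans (hκm c' k' hk')
  by_cases hy : dist y (a y) + dist y (b y) ≤ R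
  · exact case1 y hy
  · exact (case1 y0 le_rfl).trans (not_le.mp hy).le

/-- Extension of an isometric map from a lattice. -/
theorem aux_ext {X : Type*} [MetricSpace X] [CompleteSpace X]
    (hgeo : GeodesicSpace X) (hcat : CATzero X)
    {E : Type*} [NormedAddCommGroup E] [InnerProductSpace ℝ E]
    {L : Type*} [AddCommGroup L] (Φ : L →+ E) (φ : L → X)
    (hφ : ∀ m n, dist (φ m) (φ n) = ‖Φ m - Φ n‖)
    (hdense : Dense {v : E | ∃ n : ℕ, 0 < n ∧ ∃ m, Φ m = (n : ℝ) • v}) :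
    ∃ f : E → X, Isometry f := by
  set D : Set E := {v : E | ∃ n : ℕ, 0 < n ∧ ∃ m, Φ m = (n : ℝ) • v} with hD
  have hF : ∀ v : D, ∃ x : X, ∀ (z : X) (w : E),
      (∀ r, dist z (φ r) ≤ ‖w - Φ r‖) → dist z x ≤ ‖w - v‖ := by
    rintro ⟨v, n, hn, m, hm⟩
    have hn' : (0:ℝ) < n := by exact_mod_cast hn
    have hn1 : (1:ℝ) ≤ n := by exact_mod_cast hn
    obtain ⟨x, hx⟩ := aux_pt hgeo hcat (φ 0) (φ m) (1 / n) (by positivity)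
      (by rw [div_le_one hn']; exact hn1)
    refine ⟨x, fun z w hz => ?_⟩
    have h1 := hx z
    have h2 := hz 0
    have h3 := hz m
    rw [hφ] at h1
    simp only [map_zero, sub_zero, zero_sub, norm_neg] at h1 h2
    have ht0 : (0:ℝ) ≤ 1 / n := by positivity
    have ht1 : (0:ℝ) ≤ 1 - 1 / n := by rw [sub_nonneg, div_le_one hn']; exact hn1
    have h4 : dist z (φ 0) ^ 2 ≤ ‖w‖ ^ 2 := by gcongr
    have h5 : dist z (φ m) ^ 2 ≤ ‖w - Φ m‖ ^ 2 := by gcongr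
    apply aux_sq _ (norm_nonneg _)
    refine h1.trans ?_
    have h6 := mul_le_mul_of_nonneg_left h4 ht1
    have h7 := mul_le_mul_of_nonneg_left h5 ht0
    have h8 : (1 - 1 / (n:ℝ)) * ‖w‖ ^ 2 + 1 / n * ‖w - Φ m‖ ^ 2
      - 1 / n * (1 - 1 / n) * ‖Φ m‖ ^ 2 = ‖w - v‖ ^ 2 := by
      rw [hm, @norm_sub_sq_real, @norm_sub_sq_real, norm_smul, inner_smul_right]
      simp only [Real.norm_natCast]
      field_simp
      ring
    simp only at h8 ⊢
    linarith
  choose F hFp using hF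
  have hA : ∀ (v : D) r, dist (F v) (φ r) ≤ ‖(v:E) - Φ r‖ := by
    intro v r
    rw [dist_comm, norm_sub_rev]
    exact hFp v (φ r) (Φ r) (fun s => (hφ r s).le)
  have hU : ∀ v w : D, dist (F v) (F w) ≤ ‖(v:E) - w‖ := fun v w => hFp w _ _ (hA v)
  have hLow : ∀ v w : D, ‖(v:E) - w‖ ≤ dist (F v) (F w) := by
    intro v w
    obtain ⟨n, hn, m, hm⟩ := v.2
    obtain ⟨n', hn', m', hm'⟩ := w.2
    set u : E := (v:E) - w with hu
    by_cases hu0 : ‖u‖ = 0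
    · rw [hu0]; exact dist_nonneg
    have hup : 0 < ‖u‖ := lt_of_le_of_ne (norm_nonneg _) (Ne.symm hu0)
    have est : ∀ (K : ℝ) (z : E), 0 < K → ‖z - K • u‖ ≤ K * ‖u‖ - inner ℝ z u / ‖u‖
        + ‖z‖ ^ 2 / (2 * K * ‖u‖) := by
      intro K z hK
      have h1 : ‖z - K • u‖ ^ 2 = ‖z‖ ^ 2 - 2 * (K * inner ℝ z u) + (K * ‖u‖) ^ 2 := by
        rw [@norm_sub_sq_real, norm_smul, inner_smul_right, Real.norm_of_nonneg hK.le]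
      have h2 : K * ‖u‖ - inner ℝ z u / ‖u‖ + ‖z‖ ^ 2 / (2 * K * ‖u‖)
        = (‖z - K • u‖ ^ 2 + (K * ‖u‖) ^ 2) / (2 * (K * ‖u‖)) := by
        rw [h1]; field_simp; ring
      rw [h2, le_div_iff₀ (by positivity)]
      nlinarith [sq_nonneg (‖z - K • u‖ - K * ‖u‖)]
    have hb : ∀ k : ℕ, 0 < k → ‖u‖ - (‖(v:E)‖ ^ 2 + ‖(w:E)‖ ^ 2) / (2 * ‖u‖) / k
        ≤ dist (F v) (F w) := by
      intro k hk
      have hkn : 0 < k * n * n' := by positivity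
      set K : ℝ := ((k * n * n' : ℕ) : ℝ) with hKdef
      have hK : 0 < K := by rw [hKdef]; exact_mod_cast hkn
      have hkK : (k : ℝ) ≤ K := by
        rw [hKdef]
        have : k * 1 * 1 ≤ k * n * n' := by gcongr <;> omega
        exact_mod_cast (by simpa using this)
      have hk' : (0:ℝ) < k := by exact_mod_cast hk
      set r : L := (k * n') • m - (k * n) • m' with hr
      have hΦr : Φ r = K • u := by
        rw [hr, map_sub, map_nsmul, map_nsmul, hm, hm', hu, hKdef]
        rw [← Nat.cast_smul_eq_nsmul ℝ, ← Nat.cast_smul_eq_nsmul ℝ]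
        push_cast
        module
      have h1 := hA v r
      have h2 := hA w (-r)
      rw [hΦr] at h1
      rw [map_neg, hΦr, sub_neg_eq_add] at h2
      have e1 := est K v hK
      have e2 := est K (-w) hK
      have e3 : ‖-(w:E) - K • u‖ = ‖(w:E) + K • u‖ := by
        rw [← norm_neg]; congr 1; module
      rw [e3, inner_neg_left, norm_neg] at e2
      have h3 : dist (φ r) (φ (-r)) = 2 * K * ‖u‖ := by
        rw [hφ, map_neg, hΦr, sub_neg_eq_add, ← two_smul ℝ, smul_smul, norm_smul,
          Real.norm_of_nonneg (by positivity)]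
      have h4 := dist_triangle4 (φ r) (F v) (F w) (φ (-r))
      rw [dist_comm (φ r) (F v)] at h4
      have h5 : inner ℝ (v:E) u / ‖u‖ - inner ℝ (w:E) u / ‖u‖ = ‖u‖ := by
        rw [← sub_div, ← inner_sub_left, ← hu, real_inner_self_eq_norm_sq]
        field_simp
      have h6 : ‖(v:E)‖ ^ 2 / (2 * K * ‖u‖) + ‖(w:E)‖ ^ 2 / (2 * K * ‖u‖) ≤
          (‖(v:E)‖ ^ 2 + ‖(w:E)‖ ^ 2) / (2 * ‖u‖) / k := by
        rw [← add_div, div_div]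
        apply div_le_div_of_nonneg_left (by positivity) (by positivity)
        nlinarith
      have h7 : -inner ℝ (w:E) u / ‖u‖ = -(inner ℝ (w:E) u / ‖u‖) := neg_div _ _
      rw [h7] at e2
      linarith
    have hlim : Filter.Tendsto (fun k : ℕ => ‖u‖ - (‖(v:E)‖ ^ 2 + ‖(w:E)‖ ^ 2) / (2 * ‖u‖) / k)
        Filter.atTop (nhds (‖u‖ - 0)) :=
      tendsto_const_nhds.sub (tendsto_const_div_atTop_nhds_zero_nat _)
    rw [sub_zero] at hlim
    exact le_of_tendsto hlim (Filter.eventually_atTop.mpr ⟨1, fun k hk => hb k hk⟩)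
  have hiso : Isometry F := by
    apply Isometry.of_dist_eq
    intro v w
    rw [Subtype.dist_eq, dist_eq_norm]
    exact le_antisymm (hU v w) (hLow v w)
  have hdi : IsDenseInducing (Subtype.val : D → E) := hdense.isDenseEmbedding_val.isDenseInducing
  have hui : IsUniformInducing (Subtype.val : D → E) := isUniformInducing_val D
  have huc : UniformContinuous (hdi.extend F) :=
    uniformContinuous_uniformly_extend hui hdi.dense hiso.uniformContinuous
  have hval : ∀ v : D, hdi.extend F v = F v := fun v =>
    hdi.extend_eq hiso.continuous v
  refine ⟨hdi.extend F, Isometry.of_dist_eq ?_⟩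
  have hc := huc.continuous
  intro x y
  refine hdense.induction (P := fun x => dist (hdi.extend F x) (hdi.extend F y) = dist x y)
    ?_ (isClosed_eq (by fun_prop) (by fun_prop)) x
  intro v hv
  refine hdense.induction (P := fun y => dist (hdi.extend F v) (hdi.extend F y) = dist v y)
    ?_ (isClosed_eq (by fun_prop) (by fun_prop)) y
  intro w hw
  have := hiso.dist_eq ⟨v, hv⟩ ⟨w, hw⟩
  rw [← hval, ← hval] at this
  exact this


/-- Algebra: the doubling property gives the parallelogram law. -/
theorem aux_alg {A : Type*} [AddCommGroup A] (N : A → ℝ) (h0 : ∀ m, 0 ≤ N m)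
    (hpar : ∀ m n, N (m + n) ^ 2 + N (m - n) ^ 2 ≤ 2 * N m ^ 2 + 2 * N n ^ 2)
    (hsub : ∀ m n, N (m + n) ≤ N m + N n)
    (hD : ∀ m, N (m + m) = 2 * N m → N ((m + m) + (m + m)) = 2 * N (m + m))
    (m n : A) (hm : N (m + m) = 2 * N m) (hn : N (n + n) = 2 * N n) :
    N (m + n) ^ 2 + N (m - n) ^ 2 = 2 * N m ^ 2 + 2 * N n ^ 2 ∧
      N ((m + n) + (m + n)) = 2 * N (m + n) := by
  have key : ∀ m n, N (m + m) = 2 * N m → N (n + n) = 2 * N n →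
      N (m + n) ^ 2 + N (m - n) ^ 2 = 2 * N m ^ 2 + 2 * N n ^ 2 := by
    intro m n hm hn
    apply le_antisymm (hpar m n)
    have := hpar (m + n) (m - n)
    rw [show m + n + (m - n) = m + m by abel, show m + n - (m - n) = n + n by abel, hm, hn] at this
    nlinarith
  have k1 := key m n hm hn
  refine ⟨k1, le_antisymm (by linarith [hsub (m + n) (m + n)]) ?_⟩
  have k2 := key (m + m) (n + n) (hD m hm) (hD n hn)
  rw [show m + m + (n + n) = (m + n) + (m + n) by abel,
    show m + m - (n + n) = (m - n) + (m - n) by abel, hm, hn] at k2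
  have s2 := hsub (m - n) (m - n)
  have s3 : N (m - n + (m - n)) ^ 2 ≤ (N (m - n) + N (m - n)) ^ 2 :=
    pow_le_pow_left₀ (h0 _) s2 2
  apply aux_sq _ (h0 _)
  nlinarith

/-- Quadratic functions on `ℤ × ℤ`. -/
theorem aux_quadratic (Q : ℤ × ℤ → ℝ)
    (hQ : ∀ m n, Q (m + n) + Q (m - n) = 2 * Q m + 2 * Q n) (i j : ℤ) :
    Q (i, j) = Q (1, 0) * i ^ 2 + (Q (1, 1) - Q (1, 0) - Q (0, 1)) * i * j + Q (0, 1) * j ^ 2 := by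
  have affine : ∀ f : ℤ → ℝ, (∀ i, f (i + 1) + f (i - 1) = 2 * f i) → f 0 = 0 → f 1 = 0 →
      ∀ i, f i = 0 := by
    intro f hf f0 f1
    have hnat : ∀ n : ℕ, f n = 0 ∧ f (n + 1) = 0 := by
      intro n
      induction n with
      | zero => simpa using ⟨f0, f1⟩
      | succ n ih =>
        refine ⟨by exact_mod_cast ih.2, ?_⟩
        have := hf (n + 1)
        rw [add_sub_cancel_right, ih.1, ih.2] at this
        push_cast
        linarith
    have hnat' : ∀ n : ℕ, f (-n) = 0 ∧ f (-n - 1) = 0 := by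
      intro n
      induction n with
      | zero =>
        have := hf 0
        simp [f0, f1] at this
        simpa using ⟨f0, this⟩
      | succ n ih =>
        have := hf (-n - 1)
        rw [sub_add_cancel, ih.1, ih.2] at this
        push_cast
        rw [neg_add, ← sub_eq_add_neg]
        exact ⟨ih.2, by linarith⟩
    intro i
    obtain ⟨n, rfl | rfl⟩ := i.eq_nat_or_neg
    · exact (hnat n).1
    · exact (hnat' n).1
  have hQ0 : Q (0, 0) = 0 := by
    have := hQ 0 0
    simp at this
    have e : (0 : ℤ × ℤ) = (0, 0) := rfl
    rw [e] at this
    linarith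
  set f : ℤ → ℤ → ℝ := fun i j => Q (i, j) - (Q (1, 0) * i ^ 2 +
    (Q (1, 1) - Q (1, 0) - Q (0, 1)) * i * j + Q (0, 1) * j ^ 2) with hf
  have r1 : ∀ i j, f (i + 1) j + f (i - 1) j = 2 * f i j := by
    intro i j
    have := hQ (i, j) (1, 0)
    simp only [Prod.mk_add_mk, Prod.mk_sub_mk, add_zero, sub_zero] at this
    simp only [hf]
    push_cast
    linear_combination this
  have r2 : ∀ i j, f i (j + 1) + f i (j - 1) = 2 * f i j := by
    intro i j
    have := hQ (i, j) (0, 1)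
    simp only [Prod.mk_add_mk, Prod.mk_sub_mk, add_zero, sub_zero] at this
    simp only [hf]
    push_cast
    linear_combination this
  have c0 : ∀ i, f i 0 = 0 := affine (fun i => f i 0) (fun i => r1 i 0)
    (by simp [hf, hQ0]) (by simp [hf])
  have c1 : ∀ i, f i 1 = 0 := affine (fun i => f i 1) (fun i => r1 i 1)
    (by simp [hf]) (by simp [hf]; ring)
  have := affine (fun j => f i j) (fun j => r2 i j) (c0 i) (c1 i) j
  simp only [hf] at this
  linarith

/-- Doubling extends to the fourth power. -/
theorem aux_double {X : Type*} [MetricSpace X] (hgeo : GeodesicSpace X) (hcat : CATzero X)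
    (p : X) (g : X ≃ᵢ X) (h : dist p (g (g p)) = 2 * dist p (g p)) :
    dist p (g (g (g (g p)))) = 4 * dist p (g p) := by
  set c := dist p (g p) with hc
  have m1 : AuxMid p (g (g p)) (g p) := aux_mid_of_metric hgeo hcat _ _ _ c
    (by rw [dist_comm]) (by rw [g.isometry.dist_eq]) h
  have m2 := (m1.map g) p
  have m3 := ((m1.map g).map g) p
  simp only [g.isometry.dist_eq] at m2 m3
  rw [h, ← hc] at m2
  rw [h] at m3
  have t3 := dist_triangle p (g p) (g (g (g p)))
  have t4 := dist_triangle p (g p) (g (g (g (g p))))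
  simp only [g.isometry.dist_eq] at t3 t4
  rw [h] at t3
  have hc0 : 0 ≤ c := dist_nonneg
  have u3 : dist p (g (g (g p))) ^ 2 ≤ (3 * c) ^ 2 :=
    pow_le_pow_left₀ dist_nonneg (by linarith) 2
  apply le_antisymm (by linarith)
  apply aux_sq _ dist_nonneg
  nlinarith

/-- At a simultaneous minimizer, doubling holds. -/
theorem aux_min_double {X : Type*} [MetricSpace X] (hgeo : GeodesicSpace X) (hcat : CATzero X)
    (p : X) (a b : X ≃ᵢ X) (hab : ∀ x, a (b x) = b (a x))
    (hp : ∀ y : X, dist p (a p) + dist p (b p) ≤ dist y (a y) + dist y (b y)) :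
    dist p (a (a p)) = 2 * dist p (a p) := by
  obtain ⟨m, hm⟩ := aux_mid_exists hgeo hcat p (a p)
  have h1 := aux_mid_common hm.symm (hm.map a)
  have h2 := aux_mid_convex hgeo hcat hm (hm.map b)
  rw [← hab, a.isometry.dist_eq] at h2
  have h3 := hp m
  have h4 := dist_triangle p (a p) (a (a p))
  rw [a.isometry.dist_eq] at h4
  linarith

theorem aux_plane {α β γ : ℝ} (hα : 0 < α) (hD : 0 < α * γ - β ^ 2) :
    ∃ Φ : ℤ × ℤ →+ EuclideanSpace ℝ (Fin 2),
      (∀ m : ℤ × ℤ, ‖Φ m‖ ^ 2 = α * m.1 ^ 2 + 2 * β * m.1 * m.2 + γ * m.2 ^ 2) ∧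
      Dense {v | ∃ n : ℕ, 0 < n ∧ ∃ m, Φ m = (n : ℝ) • v} := by
  set s := √α with hs
  have hs2 : s ^ 2 = α := Real.sq_sqrt hα.le
  have hs0 : 0 < s := Real.sqrt_pos.mpr hα
  set d := √(α * γ - β ^ 2) with hd
  have hd2 : d ^ 2 = α * γ - β ^ 2 := Real.sq_sqrt hD.le
  have hd0 : 0 < d := Real.sqrt_pos.mpr hD
  let Ψ : ℝ × ℝ → EuclideanSpace ℝ (Fin 2) := fun x => !₂[s * x.1 + β / s * x.2, d / s * x.2]
  have hΨc : Continuous Ψ := by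
    refine (PiLp.continuous_toLp 2 _).comp (continuous_pi fun i => ?_)
    fin_cases i <;> simp <;> fun_prop
  have hΨs : Function.Surjective Ψ := by
    intro v
    refine ⟨((v 0 - β / s * (s / d * v 1)) / s, s / d * v 1), ?_⟩
    ext i
    fin_cases i
    · simp [Ψ]; field_simp; ring
    · simp [Ψ]; field_simp
  let Φ : ℤ × ℤ →+ EuclideanSpace ℝ (Fin 2) :=
    { toFun := fun m => Ψ (m.1, m.2)
      map_zero' := by ext i; fin_cases i <;> simp [Ψ]
      map_add' := by
        intro m n
        ext i
        fin_cases i <;> simp [Ψ] <;> ring }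
  have hΦ : ∀ m, Φ m = Ψ (m.1, m.2) := fun m => rfl
  refine ⟨Φ, fun m => ?_, ?_⟩
  · rw [hΦ, EuclideanSpace.norm_sq_eq]
    simp only [Ψ, Fin.sum_univ_two, Real.norm_eq_abs, sq_abs]
    simp
    have : (s * m.1 + β / s * m.2) ^ 2 + (d / s * m.2) ^ 2
      = s ^ 2 * m.1 ^ 2 + 2 * β * m.1 * m.2 + (β ^ 2 + d ^ 2) / s ^ 2 * (m.2 : ℝ) ^ 2 := by
      field_simp
      ring
    rw [this, hd2, hs2]
    field_simp
    ring
  · have hq : DenseRange (fun x : ℚ × ℚ => Ψ ((x.1 : ℝ), (x.2 : ℝ))) := by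
      have h1 : DenseRange (Prod.map ((↑) : ℚ → ℝ) ((↑) : ℚ → ℝ)) :=
        Rat.denseRange_cast.prodMap Rat.denseRange_cast
      exact hΨs.denseRange.comp h1 hΨc
    refine hq.mono ?_
    rintro _ ⟨⟨x, y⟩, rfl⟩
    refine ⟨x.den * y.den, by have := x.den_pos; have := y.den_pos; positivity,
      (x.num * y.den, y.num * x.den), ?_⟩
    have hx : ((x.num : ℤ) : ℝ) = x * x.den := by exact_mod_cast (Rat.mul_den_eq_num x).symm
    have hy : ((y.num : ℤ) : ℝ) = y * y.den := by exact_mod_cast (Rat.mul_den_eq_num y).symm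
    rw [hΦ]
    ext i
    fin_cases i <;> simp [Ψ, hx, hy] <;> ring

theorem aux_main {X : Type*} [MetricSpace X] [CompleteSpace X]
    (hgeo : GeodesicSpace X) (hcat : CATzero X)
    (Γ : Subgroup (X ≃ᵢ X))
    (hproper : ∀ x : X, ∃ V : Set X, IsOpen V ∧ x ∈ V ∧
      Set.Finite {γ : X ≃ᵢ X | γ ∈ Γ ∧ ((⇑γ) '' V ∩ V).Nonempty})
    (hfree : ∀ γ ∈ Γ, γ ≠ 1 → ∀ x : X, γ x ≠ x)
    (hcocompact : ∃ K : Set X, IsCompact K ∧ (⋃ γ ∈ Γ, (⇑γ) '' K) = univ)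
    (g : ℤ × ℤ → (X ≃ᵢ X)) (hadd : ∀ m n, g (m + n) = g m * g n)
    (hinj : Function.Injective g) (hmem : ∀ m, g m ∈ Γ) :
    ∃ f : EuclideanSpace ℝ (Fin 2) → X, Isometry f := by
  obtain ⟨K, hK, hcov⟩ := hcocompact
  have hfin := aux_fin hgeo Γ hproper K hK hcov
  have hne : Nonempty X := by
    by_contra h
    rw [not_nonempty_iff] at h
    have : g (1, 0) = g (0, 0) := by ext x; exact h.elim x
    simpa using hinj this
  have happ : ∀ m n x, g (m + n) x = g m (g n x) := by
    intro m n x; rw [hadd]; rfl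
  have hg0 : g 0 = 1 := by
    have := hadd 0 0
    simpa using this
  obtain ⟨p, hp⟩ := aux_min Γ K hK hcov hfin (g (1, 0)) (g (0, 1)) (hmem _) (hmem _)
  have hcomm : ∀ m n x, g m (g n x) = g n (g m x) := by
    intro m n x; rw [← happ, ← happ, add_comm]
  have hp' : ∀ y : X, dist p (g (0, 1) p) + dist p (g (1, 0) p) ≤
      dist y (g (0, 1) y) + dist y (g (1, 0) y) := by
    intro y; linarith [hp y]
  have da := aux_min_double hgeo hcat p _ _ (hcomm _ _) hp
  have db := aux_min_double hgeo hcat p _ _ (hcomm _ _) hp'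
  set N : ℤ × ℤ → ℝ := fun m => dist p (g m p) with hN
  have hdist : ∀ m n, dist (g m p) (g n p) = N (n - m) := by
    intro m n
    have : g n p = g m (g (n - m) p) := by rw [← happ]; congr 2; abel
    rw [this, (g m).isometry.dist_eq]
  have N0 : ∀ m, 0 ≤ N m := fun m => dist_nonneg
  have Nneg : ∀ m, N (-m) = N m := by
    intro m
    have := hdist m 0
    rw [zero_sub, hg0, dist_comm] at this
    exact this.symm
  have Npar : ∀ m n, N (m + n) ^ 2 + N (m - n) ^ 2 ≤ 2 * N m ^ 2 + 2 * N n ^ 2 := by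
    intro m n
    have := aux_quad hgeo hcat p (g n p) (g (m + n) p) (g m p)
    rw [hdist, hdist, hdist, dist_comm (g m p) p, add_sub_cancel_right,
      show m - (m + n) = -n by abel, Nneg] at this
    change N (m + n) ^ 2 + _ ≤ N n ^ 2 + _ + _ + N m ^ 2 at this
    linarith
  have Nsub : ∀ m n, N (m + n) ≤ N m + N n := by
    intro m n
    have := dist_triangle p (g m p) (g (m + n) p)
    rwa [hdist, add_sub_cancel_left] at this
  have ND : ∀ m, N (m + m) = 2 * N m → N ((m + m) + (m + m)) = 2 * N (m + m) := by
    intro m hm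
    have h1 := aux_double hgeo hcat p (g m) (by rw [← happ]; exact hm)
    rw [hm]
    simp only [hN, happ]
    rw [h1]
    ring
  have alg := aux_alg N N0 Npar Nsub ND
  have ea : N ((1, 0) + (1, 0)) = 2 * N (1, 0) := by simp only [hN, happ]; exact da
  have eb : N ((0, 1) + (0, 1)) = 2 * N (0, 1) := by simp only [hN, happ]; exact db
  let S : AddSubgroup (ℤ × ℤ) :=
    { carrier := {m | N (m + m) = 2 * N m}
      add_mem' := fun {m n} hm hn => (alg m n hm hn).2
      zero_mem' := by simp [hN, hg0]
      neg_mem' := fun {m} hm => by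
        change N (-m + -m) = 2 * N (-m)
        rw [← neg_add, Nneg, Nneg]; exact hm }
  have hS : ∀ m, N (m + m) = 2 * N m := by
    rintro ⟨i, j⟩
    have : (i, j) = i • ((1, 0) : ℤ × ℤ) + j • ((0, 1) : ℤ × ℤ) := by simp
    have h : (i, j) ∈ S := by
      rw [this]
      exact S.add_mem (S.zsmul_mem ea i) (S.zsmul_mem eb j)
    exact h
  have hQ := aux_quadratic (fun m => N m ^ 2) (fun m n => (alg m n (hS m) (hS n)).1)
  set α := N (1, 0) ^ 2 with hα
  set γ := N (0, 1) ^ 2 with hγ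
  set β := (N (1, 1) ^ 2 - α - γ) / 2 with hβ
  have hQ' : ∀ m : ℤ × ℤ, N m ^ 2 = α * m.1 ^ 2 + 2 * β * m.1 * m.2 + γ * m.2 ^ 2 := by
    rintro ⟨i, j⟩
    have := hQ i j
    rw [this, hβ]
    ring
  have hα0 : 0 < α := by
    have h1 : g (1, 0) ≠ 1 := by
      rw [← hg0]
      intro h
      simpa using hinj h
    have h2 := hfree _ (hmem _) h1 p
    have : 0 < N (1, 0) := dist_pos.mpr (Ne.symm h2)
    positivity
  have hD : 0 < α * γ - β ^ 2 := by
    by_contra hle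
    push Not at hle
    have hpu : p ∈ (⋃ γ ∈ Γ, (⇑γ) '' K) := by rw [hcov]; trivial
    simp only [mem_iUnion] at hpu
    obtain ⟨h, hh, k, hk, hkp⟩ := hpu
    let F : ℤ → X ≃ᵢ X := fun j => h⁻¹ * g (-⌊β * j / α⌋, j) * h
    have hF : Function.Injective F := by
      intro j j' e
      have := hinj (mul_left_cancel (mul_right_cancel e))
      exact (Prod.mk.inj this).2
    have hsub : range F ⊆ {γ : X ≃ᵢ X | γ ∈ Γ ∧ ∃ k ∈ K, ∃ k' ∈ K, dist k (γ k') ≤ √α} := by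
      rintro _ ⟨j, rfl⟩
      refine ⟨Γ.mul_mem (Γ.mul_mem (Γ.inv_mem hh) (hmem _)) hh, k, hk, k, hk, ?_⟩
      rw [← h.isometry.dist_eq]
      have e : h (F j k) = g (-⌊β * j / α⌋, j) (h k) := by
        rw [← IsometryEquiv.mul_apply, ← IsometryEquiv.mul_apply]
        congr 1
        simp only [F]
        group
      rw [e, hkp]
      apply Real.le_sqrt_of_sq_le
      change N _ ^ 2 ≤ α
      rw [hQ']
      simp only
      set t : ℝ := β * j / α with ht
      have f1 := Int.floor_le t
      have f2 := Int.lt_floor_add_one t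
      have hβj : β * j = α * t := by rw [ht]; field_simp
      push_cast
      have : α * (α * (-(⌊t⌋:ℝ)) ^ 2 + 2 * β * (-(⌊t⌋:ℝ)) * j + γ * (j:ℝ) ^ 2)
        = (α * (t - ⌊t⌋)) ^ 2 + (α * γ - β ^ 2) * (j:ℝ) ^ 2 := by
        linear_combination (β * j + α * t - 2 * α * ⌊t⌋) * hβj
      have h3 : (α * γ - β ^ 2) * (j:ℝ) ^ 2 ≤ 0 := mul_nonpos_of_nonpos_of_nonneg hle (sq_nonneg _)
      have h4 : (t - ⌊t⌋) ^ 2 ≤ 1 := by nlinarith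
      have h5 : (α * (t - ⌊t⌋)) ^ 2 ≤ α * α := by nlinarith [sq_nonneg α]
      exact le_of_mul_le_mul_left (by linarith) hα0
    exact (infinite_range_of_injective hF) ((hfin _).subset hsub)
  obtain ⟨Φ, hΦ, hdense⟩ := aux_plane hα0 hD
  refine aux_ext hgeo hcat Φ (fun m => g m p) (fun m n => ?_) hdense
  rw [hdist, ← map_sub, ← Nneg, neg_sub]
  have : N (m - n) ^ 2 = ‖Φ (m - n)‖ ^ 2 := by rw [hQ', hΦ]
  exact (pow_left_inj₀ (N0 _) (norm_nonneg _) two_ne_zero).mp this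

/-- **Preissman-type theorem for visibility manifolds**: if the universal
cover `X` of a closed nonpositively curved manifold contains no flat plane,
then the fundamental group (realized as the deck group `Γ`) has no subgroup
isomorphic to `ℤ ⊕ ℤ`. -/
theorem no_ZxZ_subgroup_of_visibility
    (X : Type*) [MetricSpace X] [CompleteSpace X]
    (hgeo : GeodesicSpace X) (hcat : CATzero X)
    (hnoflat : ¬ ∃ f : EuclideanSpace ℝ (Fin 2) → X, Isometry f)
    (Γ : Subgroup (X ≃ᵢ X))
    (hfree : ∀ γ ∈ Γ, γ ≠ 1 → ∀ x : X, γ x ≠ x)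
    (hproper : ∀ x : X, ∃ V : Set X, IsOpen V ∧ x ∈ V ∧
      Set.Finite {γ : X ≃ᵢ X | γ ∈ Γ ∧ ((⇑γ) '' V ∩ V).Nonempty})
    (hcocompact : ∃ K : Set X, IsCompact K ∧ (⋃ γ ∈ Γ, (⇑γ) '' K) = univ) :
    ∀ H : Subgroup Γ, ¬ Nonempty (H ≃* Multiplicative (ℤ × ℤ)) := by
  rintro H ⟨e⟩
  apply hnoflat
  refine aux_main hgeo hcat Γ hproper hfree hcocompact
    (fun m => ((e.symm (Multiplicative.ofAdd m) : Γ) : X ≃ᵢ X)) ?_ ?_ ?_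
  · intro m n
    simp
  · intro m n h
    simpa using h
  · intro m
    exact SetLike.coe_mem _
end
end
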